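/- Let u : ℝ → ℂ and λ₁, λ ∈ ℂ with λ² ≠ λ₁². Let η : ℝ → ℂ² be a differentiable solution of the KN spectral problem at λ₁ with potential u such that d_{λ₁}(η(x),η(x)) ≠ 0 for all x ∈ ℝ, and let ψ : ℝ → ℂ² be a differentiable solution of the KN spectral problem at λ with potential u. Define u⁽¹⁾(x) := B_{λ₁}(η(x))u(x). Then ψ⁽¹⁾(x) := M[η(x),λ,λ₁]·ψ(x) is a differentiable solution of the KN spectral problem at λ with potential u⁽¹⁾, i.e. (ψ⁽¹⁾)'(x) = (−iλ²σ₃ + λQ(u⁽¹⁾(x)))ψ⁽¹⁾(x) for all x ∈ ℝ. -/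

import Mathlib

/-! A solution `η` of the spectral problem at `l1` makes `M = Mmat η l l1` an intertwiner: writing
`L(u) = -i l² σ₃ + l Q(u)`, one has `M' = L(u⁽¹⁾) M - M L(u)`, and hence `(M ψ)' = L(u⁽¹⁾) M ψ` for
every solution `ψ` of `ψ' = L(u) ψ`.

Put `w = u⁽¹⁾` and let a bar denote complex conjugation. Comparing entries, the first row of the
intertwining relation amounts to
`2i G' = w S̄ - ū S`, `S' = -2i |l1|² (u + w)` and `w Ḡ = -G u + S`,
and the second row to the conjugates of these equations. The third holds by definition of `w`, since
`|G| = 1` (`Gop_mul_conj`). For the first two (`hasDerivAt_Gop_Sop`), let `a, b` be the components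
of `η`. The conjugates `ā, b̄` satisfy the conjugate linear equations, so `G` and `S`, which are
rational in `a, b, ā, b̄` with denominator `d = l1 a ā + l̄1 b b̄`, can be differentiated explicitly;
after clearing the nonzero denominators `d` and `d̄`, both equations are polynomial identities. -/

open Complex

/-- The Pauli matrix `σ₃`. -/
def sigma3 : Matrix (Fin 2) (Fin 2) ℂ := !![1, 0; 0, -1]

/-- The potential matrix `Q(u) = [[0,u],[−conj(u),0]]`. -/
def Qmat (u : ℂ) : Matrix (Fin 2) (Fin 2) ℂ := !![0, u; -(starRingEnd ℂ u), 0]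

/-- `ψ` solves the Kaup–Newell spectral problem at `λ` with potential `u`:
`ψ'(x) = (−iλ²σ₃ + λQ(u(x)))ψ(x)`. -/
def SolvesKN (u : ℝ → ℂ) (l : ℂ) (ψ : ℝ → Fin 2 → ℂ) : Prop :=
  ∀ x : ℝ, HasDerivAt ψ (((-Complex.I * l ^ 2) • sigma3 + l • Qmat (u x)).mulVec (ψ x)) x

/-- The bilinear form `d_λ(η,η) := λ|η₁|² + conj(λ)|η₂|²`. -/
noncomputable def dForm (l : ℂ) (η : Fin 2 → ℂ) : ℂ :=
  l * (‖η 0‖ : ℂ) ^ 2 + (starRingEnd ℂ l) * (‖η 1‖ : ℂ) ^ 2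

/-- `G_λ(η) := d_{conj(λ)}(η,η)/d_λ(η,η)`. -/
noncomputable def Gop (l : ℂ) (η : Fin 2 → ℂ) : ℂ :=
  dForm (starRingEnd ℂ l) η / dForm l η

/-- `S_λ(η) := 2i(λ² − conj(λ)²)η₁conj(η₂)/d_λ(η,η)`. -/
noncomputable def Sop (l : ℂ) (η : Fin 2 → ℂ) : ℂ :=
  2 * Complex.I * (l ^ 2 - (starRingEnd ℂ l) ^ 2) * η 0 * (starRingEnd ℂ (η 1)) / dForm l η

/-- The Bäcklund transformation `B_λ(η)u := G_λ(η)(−G_λ(η)u + S_λ(η))`. -/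
noncomputable def Bop (l : ℂ) (η : Fin 2 → ℂ) (u : ℂ) : ℂ :=
  Gop l η * (-(Gop l η) * u + Sop l η)

/-- The Darboux transformation matrix `M[η,λ,λ₁]`. -/
noncomputable def Mmat (η : Fin 2 → ℂ) (l l1 : ℂ) : Matrix (Fin 2) (Fin 2) ℂ :=
  (l1 / starRingEnd ℂ l1 * (l ^ 2 - l1 ^ 2)⁻¹) •
    !![l ^ 2 * Gop l1 η - (‖l1‖ : ℂ) ^ 2, -(l / (2 * Complex.I)) * Sop l1 η;
       (l / (2 * Complex.I)) * starRingEnd ℂ (Sop l1 η),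
         -(l ^ 2) * starRingEnd ℂ (Gop l1 η) + (‖l1‖ : ℂ) ^ 2]

/-- The two scalar equations contained in the spectral problem. -/
theorem SolvesKN.components {u : ℝ → ℂ} {l : ℂ} {ψ : ℝ → Fin 2 → ℂ} (h : SolvesKN u l ψ) (x : ℝ) :
    HasDerivAt (fun t => ψ t 0) (-I * l ^ 2 * ψ x 0 + l * u x * ψ x 1) x ∧
      HasDerivAt (fun t => ψ t 1) (I * l ^ 2 * ψ x 1 - l * starRingEnd ℂ (u x) * ψ x 0) x := by
  have h' := hasDerivAt_pi.1 (h x)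
  constructor
  · refine (h' 0).congr_deriv ?_
    simp [sigma3, Qmat, Matrix.mulVec, dotProduct, Fin.sum_univ_two]
  · refine (h' 1).congr_deriv ?_
    simp [sigma3, Qmat, Matrix.mulVec, dotProduct, Fin.sum_univ_two]
    ring

theorem hasDerivAt_conj {f : ℝ → ℂ} {f' : ℂ} {x : ℝ} (h : HasDerivAt f f' x) :
    HasDerivAt (fun t => starRingEnd ℂ (f t)) (starRingEnd ℂ f') x :=
  h.star

theorem dForm_eq (l : ℂ) (η : Fin 2 → ℂ) :
    dForm l η = l * (η 0 * starRingEnd ℂ (η 0)) +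
      starRingEnd ℂ l * (η 1 * starRingEnd ℂ (η 1)) := by
  simp only [dForm, Complex.mul_conj']

theorem conj_dForm (l : ℂ) (η : Fin 2 → ℂ) :
    starRingEnd ℂ (dForm l η) = dForm (starRingEnd ℂ l) η := by
  simp [dForm]

theorem Gop_mul_conj {l : ℂ} {η : Fin 2 → ℂ} (hd : dForm l η ≠ 0) :
    Gop l η * starRingEnd ℂ (Gop l η) = 1 := by
  have hD : starRingEnd ℂ (dForm l η) ≠ 0 := by simpa using hd
  rw [Gop, ← conj_dForm, map_div₀, Complex.conj_conj]
  field_simp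

/-- The differential equations for `G` and `S` contained in the first row of the intertwining
relation `M' = L(u⁽¹⁾) M - M L(u)`. -/
theorem hasDerivAt_Gop_Sop {u : ℝ → ℂ} {l1 : ℂ} {η : ℝ → Fin 2 → ℂ}
    (hη : SolvesKN u l1 η) (x : ℝ) (hd : dForm l1 (η x) ≠ 0) :
    HasDerivAt (fun t => Gop l1 (η t))
      ((Bop l1 (η x) (u x) * starRingEnd ℂ (Sop l1 (η x)) -
        starRingEnd ℂ (u x) * Sop l1 (η x)) / (2 * I)) x ∧
    HasDerivAt (fun t => Sop l1 (η t))
      (-(2 * I) * (‖l1‖ : ℂ) ^ 2 * (u x + Bop l1 (η x) (u x))) x := by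
  obtain ⟨ha, hb⟩ := hη.components x
  have hA := hasDerivAt_conj ha
  have hB := hasDerivAt_conj hb
  have hform (k : ℂ) := ((ha.mul hA).const_mul k).add ((hb.mul hB).const_mul (starRingEnd ℂ k))
  have hG := (hform (starRingEnd ℂ l1)).div (hform l1)
    (by simpa [dForm_eq] using hd)
  have hS := ((ha.const_mul (2 * I * (l1 ^ 2 - (starRingEnd ℂ l1) ^ 2))).mul hB).div (hform l1)
    (by simpa [dForm_eq] using hd)
  have hD : dForm (starRingEnd ℂ l1) (η x) ≠ 0 := by simpa [← conj_dForm] using hd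
  rw [dForm_eq] at hd hD
  constructor
  · refine (hG.congr_of_eventuallyEq (.of_forall fun t => ?_)).congr_deriv ?_
    · simp [Gop, dForm_eq]
    · simp only [Bop, Gop, Sop, map_div₀, map_mul, map_sub, map_add, map_pow, map_neg,
        Complex.conj_conj, Complex.conj_I, map_ofNat, dForm_eq, Pi.add_apply, Pi.mul_apply] at hd hD ⊢
      -- The identity is polynomial: it holds with the conjugates as independent variables.
      generalize starRingEnd ℂ (η x 0) = A at *
      generalize starRingEnd ℂ (η x 1) = B at *
      generalize starRingEnd ℂ (u x) = U at *
      generalize starRingEnd ℂ l1 = K at *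
      generalize η x 0 = a at *
      generalize η x 1 = b at *
      generalize u x = v at *
      clear hG hS hform hA hB ha hb
      simp only [← mul_assoc] at hd hD
      field_simp
      ring
  · refine (hS.congr_of_eventuallyEq (.of_forall fun t => ?_)).congr_deriv ?_
    · simp [Sop, dForm_eq]
    · simp only [Bop, Gop, Sop, map_mul, map_sub, map_add, map_pow, map_neg,
        Complex.conj_conj, Complex.conj_I, dForm_eq, Pi.add_apply, Pi.mul_apply,
        ← Complex.mul_conj'] at hd hD ⊢
      generalize starRingEnd ℂ (η x 0) = A at *
      generalize starRingEnd ℂ (η x 1) = B at *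
      generalize starRingEnd ℂ (u x) = U at *
      generalize starRingEnd ℂ l1 = K at *
      generalize η x 0 = a at *
      generalize η x 1 = b at *
      generalize u x = v at *
      clear hG hS hform hA hB ha hb
      simp only [← mul_assoc] at hd hD
      field_simp
      ring

theorem darboux_transform_of_jost (u : ℝ → ℂ) (l1 l : ℂ) (hll : l ^ 2 ≠ l1 ^ 2)
    (η : ℝ → Fin 2 → ℂ) (hη : SolvesKN u l1 η) (hd : ∀ x : ℝ, dForm l1 (η x) ≠ 0)
    (ψ : ℝ → Fin 2 → ℂ) (hψ : SolvesKN u l ψ) :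
    SolvesKN (fun x => Bop l1 (η x) (u x)) l (fun x => (Mmat (η x) l l1).mulVec (ψ x)) := by
  intro x
  obtain ⟨hp, hq⟩ := hψ.components x
  obtain ⟨hG, hS⟩ := hasDerivAt_Gop_Sop hη x (hd x)
  have hGc := hasDerivAt_conj hG
  have hSc := hasDerivAt_conj hS
  have hGG := Gop_mul_conj (hd x)
  -- The coefficient of `l ^ 3` in the off-diagonal entries of the intertwining relation.
  have hBG : Bop l1 (η x) (u x) * starRingEnd ℂ (Gop l1 (η x)) =
      -(Gop l1 (η x)) * u x + Sop l1 (η x) := by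
    rw [Bop]; linear_combination (-(Gop l1 (η x)) * u x + Sop l1 (η x)) * hGG
  have hBGc := congrArg (starRingEnd ℂ) hBG
  simp only [map_mul, map_add, map_neg, Complex.conj_conj] at hBGc
  refine hasDerivAt_pi.2 fun i => ?_
  fin_cases i
  · have h := ((((hG.const_mul (l ^ 2)).sub_const ((‖l1‖ : ℂ) ^ 2)).mul hp).add
      ((hS.const_mul (-(l / (2 * I)))).mul hq)).const_mul
        (l1 / starRingEnd ℂ l1 * (l ^ 2 - l1 ^ 2)⁻¹)
    refine (h.congr_of_eventuallyEq (.of_forall fun t => ?_)).congr_deriv ?_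
    · simp [Mmat, Matrix.mulVec, dotProduct, Fin.sum_univ_two]; ring
    · simp [Mmat, sigma3, Qmat, Matrix.mulVec, dotProduct, Fin.sum_univ_two]
      generalize Bop l1 (η x) (u x) = w at *
      generalize l1 / starRingEnd ℂ l1 * (l ^ 2 - l1 ^ 2)⁻¹ = c at *
      field_simp
      linear_combination c * l * 2 * I * ψ x 1 * l ^ 2 * hBG
  · have h := (((hSc.const_mul (l / (2 * I))).mul hp).add
      (((hGc.const_mul (-(l ^ 2))).add_const ((‖l1‖ : ℂ) ^ 2)).mul hq)).const_mul
        (l1 / starRingEnd ℂ l1 * (l ^ 2 - l1 ^ 2)⁻¹)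
    refine (h.congr_of_eventuallyEq (.of_forall fun t => ?_)).congr_deriv ?_
    · simp [Mmat, Matrix.mulVec, dotProduct, Fin.sum_univ_two]; ring
    · simp [Mmat, sigma3, Qmat, Matrix.mulVec, dotProduct, Fin.sum_univ_two, Complex.conj_ofNat]
      generalize Bop l1 (η x) (u x) = w at *
      generalize l1 / starRingEnd ℂ l1 * (l ^ 2 - l1 ^ 2)⁻¹ = c at *
      field_simp
      linear_combination c * l * 2 * I * ψ x 0 * l ^ 2 * hBGc
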